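/- For all sentences J and B, K_{J,B} = Σ_{C ⪰ B} L_{J,C}, where the sum runs over all sentences C that are coarsenings of B; that is, the number of colored immaculate tableaux of shape J and type B equals the number of standard colored immaculate tableaux of shape J whose colored descent composition is a coarsening of B. -/

import Mathlib

open scoped BigOperators

namespace ColoredImm

variable {A : Type*}

/-- A *weak sentence* over the alphabet `A`: a finite list of words (words may be empty). -/
abbrev Sentence (A : Type*) := List (List A)

/-- A genuine *sentence*: all of its words are nonempty. -/
def IsSentence (I : Sentence A) : Prop := ∀ w ∈ I, w ≠ []

/-- The size `|I|` of a sentence: its total number of letters. -/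
def size (I : Sentence A) : ℕ := (I.map List.length).sum

/-- The word lengths `wℓ(I)` of a sentence. -/
def wl (I : Sentence A) : List ℕ := I.map List.length

/-- The flattening of a weak sentence: delete all empty words. -/
def flattenWS (I : Sentence A) : Sentence A := I.filter (fun w => !w.isEmpty)

/-- `Refines J I` means `J ⪯ I`: the sentence `I` can be obtained by concatenating
some adjacent words of `J` (so `J` is a refinement of `I`, and `I` a coarsening of `J`). -/
def Refines (J I : Sentence A) : Prop :=
  ∃ P : List (Sentence A), (∀ p ∈ P, p ≠ []) ∧ P.flatten = J ∧ P.map List.flatten = I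

/-! ### Fillings and colored immaculate tableaux -/

/-- An integer filling of a diagram, recorded row by row. -/
abbrev Filling := List (List ℕ)

/-- The entry of a filling at box `b = (row, column)` (0-indexed), with default `0`. -/
def entryAt (f : Filling) (b : ℕ × ℕ) : ℕ := (f.getD b.1 []).getD b.2 0

/-- `IsCIT I f`: `f` is a colored immaculate tableau of shape `I`; that is, `f` has the
same shape as the colored composition diagram of `I`, its entries are positive integers
weakly increasing left to right along each row, and the entries in the first column are
strictly increasing from top to bottom. -/
def IsCIT (I : Sentence A) (f : Filling) : Prop :=
  f.map List.length = I.map List.length ∧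
  (∀ row ∈ f, row.Chain' (· ≤ ·)) ∧
  (f.filterMap List.head?).Chain' (· < ·) ∧
  (∀ x ∈ f.flatten, 1 ≤ x)

/-- The colors (letters of `w`) of the boxes of one row whose entry (in `row`) is `v`,
read from left to right. -/
def rowWith (w : List A) (row : List ℕ) (v : ℕ) : List A :=
  ((w.zip row).filter (fun p => p.2 == v)).map Prod.fst

/-- The word of the type of a tableau at value `v`: the colors of all boxes with entry `v`,
read left to right, from the bottom row up to the top row. -/
def typeWord (I : Sentence A) (f : Filling) (v : ℕ) : List A :=
  (((I.zip f).reverse).map (fun p => rowWith p.1 p.2 v)).flatten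

/-- `HasType I f B` : the tableau `f` (of shape `I`) has type the weak sentence `B`,
i.e. for every positive integer `v`, the colors of the boxes of `f` containing `v`
(read left to right, bottom to top) form the `v`-th word of `B`. -/
def HasType (I : Sentence A) (f : Filling) (B : Sentence A) : Prop :=
  ∀ v, 1 ≤ v → typeWord I f v = B.getD (v - 1) []

/-- `K_{J,B}`: the number of colored immaculate tableaux of shape `J` and type `B`. -/
noncomputable def KJB (J B : Sentence A) : ℕ :=
  Set.ncard {f : Filling | IsCIT J f ∧ HasType J f B}

/-! ### Standardization -/

/-- The list of boxes of a filling. -/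
def boxes (f : Filling) : List (ℕ × ℕ) :=
  ((List.range f.length).map
    (fun r => (List.range (f.getD r []).length).map (fun j => (r, j)))).flatten

/-- `beforeB f b b'`: box `b` comes strictly before box `b'` in the type-reading order of `f`
(smaller entries first; among equal entries, lower rows first, and within a row left to right). -/
def beforeB (f : Filling) (b b' : ℕ × ℕ) : Bool :=
  entryAt f b < entryAt f b' ||
    (entryAt f b == entryAt f b' && (b'.1 < b.1 || (b.1 == b'.1 && b.2 < b'.2)))

/-- The standardization of a filling: each box is renumbered (starting from `1`)
according to its position in the type-reading order. -/
def stdFill (f : Filling) : Filling :=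
  (List.range f.length).map (fun r =>
    (List.range (f.getD r []).length).map (fun j =>
      1 + ((boxes f).filter (fun b' => beforeB f b' (r, j))).length))

/-- The number of boxes of a filling. -/
def nBoxes (f : Filling) : ℕ := f.flatten.length

/-- A filling of `n` boxes is standard when its entries are exactly `1, …, n`,
each appearing once. -/
def IsStandardF (f : Filling) : Prop := f.flatten.Perm (List.range' 1 (nBoxes f))

/-! ### Descents and the colored descent composition -/

/-- The (0-indexed) row containing the value `v` in a standard filling. -/
def rowOf (f : Filling) (v : ℕ) : ℕ := f.findIdx (fun row => row.contains v)

/-- The sorted list of descents of a standard filling: those `i` with `1 ≤ i ≤ n-1`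
such that `i+1` lies in a strictly lower row than `i`. -/
def descList (f : Filling) : List ℕ :=
  (List.range' 1 (nBoxes f - 1)).filter (fun i => decide (rowOf f i < rowOf f (i + 1)))

/-- The composition of `n` associated to a set of split positions `d_1 < … < d_k`:
`(d_1, d_2 - d_1, …, n - d_k)`. -/
def compOf (ds : List ℕ) (n : ℕ) : List ℕ :=
  List.zipWith (fun a b => b - a) (0 :: ds) (ds ++ [n])

/-- Split a word into a sentence according to a composition. -/
def splitByComp : List A → List ℕ → List (List A)
  | _, [] => []
  | w, a :: rest => w.take a :: splitByComp (w.drop a) rest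

/-- The color of the box containing the value `v` in a standard filling of shape `I`. -/
def colorOf [Inhabited A] (I : Sentence A) (f : Filling) (v : ℕ) : A :=
  (I.getD (rowOf f v) []).getD ((f.getD (rowOf f v) []).findIdx (fun x => x == v)) default

/-- The maximal word of the colored descent composition of a standard filling of shape `I`:
the colors of its boxes read in the order of their integer entries. -/
def readWord [Inhabited A] (I : Sentence A) (f : Filling) : List A :=
  (List.range (nBoxes f)).map (fun i => colorOf I f (i + 1))

/-- The colored descent composition `co_A(U)` of a standard colored immaculate tableau:
read the colors of the boxes in the order of their entries, starting a new word
immediately after each descent. -/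
def coA [Inhabited A] (I : Sentence A) (f : Filling) : Sentence A :=
  if nBoxes f = 0 then [] else splitByComp (readWord I f) (compOf (descList f) (nBoxes f))

/-- `L_{J,C}`: the number of standard colored immaculate tableaux of shape `J`
with colored descent composition `C`. -/
noncomputable def LJC [Inhabited A] (J C : Sentence A) : ℕ :=
  Set.ncard {f : Filling | IsCIT J f ∧ IsStandardF f ∧ coA J f = C}

/-! ### The colored quasisymmetric functions `QSym_A` -/

/-- A (normal form of a) monomial in the partially commutative variables `x_{a,i}`:
a pair consisting of the list of words `(w_1, …, w_m)` and the list of (strictly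
increasing, positive) second indices `(j_1 < … < j_m)`, representing
`x_{w_1,j_1} ⋯ x_{w_m,j_m}`. -/
abbrev Mono (A : Type*) := List (List A) × List ℕ

/-- A colored quasisymmetric "series": a formal linear combination of monomials,
recorded by its coefficient function.  `QSym_A` itself is the span of the colored
monomial functions `MQ I` inside this space. -/
abbrev QSymA (A : Type*) := Mono A → ℚ

/-- Validity of a monomial normal form: words and indices match up, the indices are
strictly increasing positive integers, and all words are nonempty. -/
def ValidMono (m : Mono A) : Prop :=
  m.1.length = m.2.length ∧ m.2.Chain' (· < ·) ∧ (∀ j ∈ m.2, 1 ≤ j) ∧ ∀ w ∈ m.1, w ≠ []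

open Classical in
/-- The colored monomial quasisymmetric function `M_I`: the sum of all monomials
`x_{w_1,j_1} ⋯ x_{w_m,j_m}` with `j_1 < … < j_m`, where `I = (w_1, …, w_m)`. -/
noncomputable def MQ (I : Sentence A) : QSymA A := fun m =>
  if m.1 = I ∧ ValidMono m then 1 else 0

/-- The largest entry of a filling. -/
def maxEntry (f : Filling) : ℕ := f.flatten.foldr max 0

/-- The monomial `x_T` of a colored immaculate tableau `T = f` of shape `I`:
for `T` of type `B = (u_1, …, u_j)` it is `x_{u_1,1} x_{u_2,2} ⋯ x_{u_j,j}`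
(empty words are skipped). -/
def monoOf (I : Sentence A) (f : Filling) : Mono A :=
  let vs := ((List.range (maxEntry f)).map (· + 1)).filter (fun v => !(typeWord I f v).isEmpty)
  (vs.map (typeWord I f), vs)

/-- The colored dual immaculate function `𝔖*_J = Σ_T x_T`, the sum of the monomials of all
colored immaculate tableaux `T` of shape `J` (its coefficient at a monomial `m` is the
number of such tableaux with `x_T = m`). -/
noncomputable def dualImm (J : Sentence A) : QSymA A := fun m =>
  (Set.ncard {f : Filling | IsCIT J f ∧ monoOf J f = m} : ℚ)

/-- The colored fundamental quasisymmetric function `F_I = Σ_{J ⪯ I} M_J`. -/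
noncomputable def FQ (I : Sentence A) : QSymA A :=
  ∑ᶠ J ∈ {J : Sentence A | Refines J I}, MQ J

/-! ### The colored immaculate descent graph -/

/-- Edges of the colored immaculate descent graph: a directed edge from `I` to `J` (`J ≠ I`)
whenever some standard colored immaculate tableau of shape `I` has colored descent
composition `J`. -/
def IsEdge [Inhabited A] (I J : Sentence A) : Prop := J ≠ I ∧ LJC I J ≠ 0

/-- Directed paths from `I` to `K` in the colored immaculate descent graph, recorded by
their (nonempty) lists of successive vertices; the path `[I]` is the empty path at `I`. -/
def PathsFromTo [Inhabited A] (I K : Sentence A) : Set (List (Sentence A)) :=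
  {p | p.head? = some I ∧ p.getLast? = some K ∧ p.Chain' IsEdge}

/-- The signed weight `(-1)^{ℓ(𝒫)} prod(𝒫)` of a directed path `𝒫`:
`ℓ(𝒫)` is its number of edges and `prod(𝒫)` the product of its edge weights `L_{I,J}`. -/
noncomputable def pathWeight [Inhabited A] (p : List (Sentence A)) : ℚ :=
  ((-1 : ℚ)) ^ (p.length - 1) * ((p.zip p.tail).map (fun e => (LJC e.1 e.2 : ℚ))).prod

/-- `L⁻¹_{I,K} = Σ_𝒫 (-1)^{ℓ(𝒫)} prod(𝒫)`, summed over all directed paths `𝒫`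
from `I` to `K` in the colored immaculate descent graph. -/
noncomputable def Linv [Inhabited A] (I K : Sentence A) : ℚ :=
  ∑ᶠ p ∈ PathsFromTo I K, pathWeight p

/-! ### The colored noncommutative symmetric functions `NSym_A` -/

/-- A formal series over the complete homogeneous basis `{H_I}` of `NSym_A`, recorded by its
coefficient function on (weak) sentences.  `NSym_A` itself consists of the finitely
supported elements supported on genuine sentences; see `InNSym`. -/
abbrev NSymA (A : Type*) := Sentence A → ℚ

/-- Membership in `NSym_A` proper: finitely supported, and supported on genuine sentences. -/
def InNSym (f : NSymA A) : Prop :=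
  (Function.support f).Finite ∧ ∀ I, f I ≠ 0 → IsSentence I

open Classical in
/-- The colored complete homogeneous noncommutative symmetric function
`H_I = H_{w_1} ⋯ H_{w_k}`. -/
noncomputable def Hd (I : Sentence A) : NSymA A := fun J => if J = I then 1 else 0

/-- `H_w` for a single word `w`, with `H_∅ = 1`. -/
noncomputable def Hw (w : List A) : NSymA A := if w.isEmpty then Hd [] else Hd [w]

/-- Multiplication in `NSym_A` (the concatenation product, extended to series):
`H_I · H_J = H_{I ⬝ J}`. -/
def mulN (f g : NSymA A) : NSymA A := fun I =>
  ∑ j ∈ Finset.range (I.length + 1), f (I.take j) * g (I.drop j)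

/-- The duality pairing `⟨·,·⟩ : NSym_A × QSym_A → ℚ`, determined by
`⟨H_I, M_J⟩ = δ_{I,J}`: the `M_I`-coefficient of a quasisymmetric function is its
coefficient on the monomial `x_{w_1,1} x_{w_2,2} ⋯ x_{w_k,k}`. -/
noncomputable def pairNQ (G : NSymA A) (F : QSymA A) : ℚ :=
  ∑ᶠ I ∈ {I : Sentence A | IsSentence I}, G I * F (I, List.range' 1 I.length)

/-- All ways of splitting each word of a list of words into a prefix and a suffix. -/
def splitsOf : List (List A) → List (List (List A) × List (List A))
  | [] => [([], [])]
  | w :: ws =>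
      (((splitsOf ws).map (fun p =>
        (List.range (w.length + 1)).map (fun t => (w.take t :: p.1, w.drop t :: p.2))))).flatten

/-- Restriction of a candidate monomial: keep only the nonempty words together with
their indices. -/
def restrictMono (ws : List (List A)) (js : List ℕ) : Mono A :=
  let ps := (ws.zip js).filter (fun p => !p.1.isEmpty)
  (ps.map Prod.fst, ps.map Prod.snd)

/-- The product of colored quasisymmetric series: the coefficient of a monomial in `F·G`
is the sum, over all ways of writing each of its words as a concatenation of a word of a
monomial of `F` (on the left) and a word of a monomial of `G` (on the right), of the
products of the corresponding coefficients. -/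
def mulQ (F G : QSymA A) : QSymA A := fun m =>
  ((splitsOf m.1).map (fun p => F (restrictMono p.1 m.2) * G (restrictMono p.2 m.2))).sum

/-- The right perp operator `M^⊸` of `M ∈ QSym_A`, the linear operator on `NSym_A`
determined by `⟨M^⊸(H), G⟩ = ⟨H, G·M⟩`; explicitly, for the dual bases `{M_I}` and `{H_I}`,
`M^⊸(H) = Σ_I ⟨H, M_I · M⟩ H_I`. -/
noncomputable def rperp (M : QSymA A) (H : NSymA A) : NSymA A :=
  ∑ᶠ I ∈ {I : Sentence A | IsSentence I}, pairNQ H (mulQ (MQ I) M) • Hd I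

/-- The colored noncommutative Bernstein operator
`𝔹_v = Σ_u Σ_{Q : w(Q^r) = u} (-1)^{ℓ(Q)} H_{v·u} · (Σ_{S ⪰ Q} M_S^⊸)`,
where `Q` runs over all sentences, `u = w(Q^r)` is the concatenation of the words of `Q`
in reverse order, and `S` runs over all coarsenings of `Q`. -/
noncomputable def Bern (v : List A) (f : NSymA A) : NSymA A :=
  ∑ᶠ Q ∈ {Q : Sentence A | IsSentence Q},
    ((-1 : ℚ)) ^ Q.length •
      mulN (Hw (v ++ Q.reverse.flatten))
        (∑ᶠ S ∈ {S : Sentence A | Refines Q S}, rperp (MQ S) f)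

/-- The colored immaculate function `𝔖_J = 𝔹_{v_1} 𝔹_{v_2} ⋯ 𝔹_{v_h}(1)`. -/
noncomputable def ImmS (J : Sentence A) : NSymA A := J.foldr Bern (Hd [])

/-- The colored ribbon function `R_I = Σ_{J ⪰ I} (-1)^{ℓ(J) - ℓ(I)} H_J`. -/
noncomputable def Rib (I : Sentence A) : NSymA A :=
  ∑ᶠ J ∈ {J : Sentence A | Refines I J}, ((-1 : ℚ)) ^ (I.length - J.length) • Hd J

/-- The Pieri relation `J ⊂_w K` for a sentence `J = (v_1, …, v_h)` and a word `w`: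
`K = (u_1, …, u_g)` with `h ≤ g ≤ h+1` (setting `v_{h+1} = ∅`) and `u_j = v_j · q_j`
for words `q_j` (possibly empty) whose reversed concatenation `q_g ⋯ q_1` equals `w`. -/
def PieriRel (J : Sentence A) (w : List A) (K : Sentence A) : Prop :=
  J.length ≤ K.length ∧ K.length ≤ J.length + 1 ∧
  ∃ q : List (List A), q.length = K.length ∧ q.reverse.flatten = w ∧
    ∀ j < K.length, K.getD j [] = J.getD j [] ++ q.getD j []

/-- Right containment of a weak sentence `K` in `J`: same length, and each word of `K` is a
suffix of the corresponding word of `J`. -/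
def RightContained (K J : Sentence A) : Prop :=
  K.length = J.length ∧ ∀ i < J.length, (K.getD i []).IsSuffix (J.getD i [])

/-- The weak sentence `J/_R K`: remove each word of `K` from the right end of the
corresponding word of `J`. -/
def rightQuot (J K : Sentence A) : Sentence A :=
  List.zipWith (fun v u => v.take (v.length - u.length)) J K

/-- Left containment `J ⊆_L I`: `ℓ(J) ≤ ℓ(I)` and each word of `J` is a prefix of the
corresponding word of `I`. -/
def LeftContained (J I : Sentence A) : Prop :=
  J.length ≤ I.length ∧ ∀ i < J.length, (J.getD i []).IsPrefix (I.getD i [])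

/-- A skew colored immaculate tableau of shape `I/J`: a filling of the active boxes
(the `i`-th row keeps the last `|w_i| - |v_i|` boxes) with positive integers, rows weakly
increasing left to right, and the entries in the (active part of the) first column of `I`
strictly increasing top to bottom. -/
def IsSkewCIT (I J : Sentence A) (f : Filling) : Prop :=
  f.map List.length =
    (List.range I.length).map (fun i => (I.getD i []).length - (J.getD i []).length) ∧
  (∀ row ∈ f, row.Chain' (· ≤ ·)) ∧
  ((List.range I.length).filterMap
    (fun i => if (J.getD i []).length = 0 then (f.getD i []).head? else none)).Chain' (· < ·) ∧
  (∀ x ∈ f.flatten, 1 ≤ x)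

/-- The word of the type of a skew tableau at value `v`: the colors of the active boxes with
entry `v`, read left to right, bottom to top. -/
def skewTypeWord (I J : Sentence A) (f : Filling) (v : ℕ) : List A :=
  (((List.range I.length).reverse).map (fun i =>
    rowWith ((I.getD i []).drop (J.getD i []).length) (f.getD i []) v)).flatten

/-- `SkewHasType I J f K` : the skew tableau `f` of shape `I/J` has type `K`. -/
def SkewHasType (I J : Sentence A) (f : Filling) (K : Sentence A) : Prop :=
  ∀ v, 1 ≤ v → skewTypeWord I J f v = K.getD (v - 1) []

/-! ### The complement involution `ψ` and the row-strict functions -/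

/-- The complement `I^c` of a sentence: the unique sentence with the same maximal word
that splits exactly where `I` does not. -/
def complSent (I : Sentence A) : Sentence A :=
  let w := I.flatten
  let n := w.length
  if n = 0 then []
  else
    let splits := (((wl I).scanl (· + ·) 0).drop 1).dropLast
    let csplits := (List.range' 1 (n - 1)).filter (fun i => !(splits.contains i))
    splitByComp w (compOf csplits n)

/-- The `M_I`-coefficient of a colored quasisymmetric function. -/
noncomputable def coeffM (G : QSymA A) (I : Sentence A) : ℚ := G (I, List.range' 1 I.length)

/-- The image of `M_I` under `ψ`, via `M_I = Σ_{J ⪯ I} (-1)^{ℓ(J)-ℓ(I)} F_J` and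
`ψ(F_J) = F_{J^c}`. -/
noncomputable def psiM (I : Sentence A) : QSymA A :=
  ∑ᶠ J ∈ {J : Sentence A | Refines J I}, ((-1 : ℚ)) ^ (J.length - I.length) • FQ (complSent J)

/-- The linear involution `ψ` of `QSym_A`, determined by `ψ(F_I) = F_{I^c}`. -/
noncomputable def psiQ (G : QSymA A) : QSymA A :=
  ∑ᶠ I ∈ {I : Sentence A | IsSentence I}, coeffM G I • psiM I

/-- A colored row-strict immaculate tableau of shape `I`: entries strictly increase left to
right along each row and weakly increase top to bottom down the first column. -/
def IsCRSIT (I : Sentence A) (f : Filling) : Prop :=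
  f.map List.length = I.map List.length ∧
  (∀ row ∈ f, row.Chain' (· < ·)) ∧
  (f.filterMap List.head?).Chain' (· ≤ ·) ∧
  (∀ x ∈ f.flatten, 1 ≤ x)

/-- The word of the type of a row-strict tableau at value `v`: the colors of the boxes with
entry `v`, read left to right, top to bottom. -/
def rsTypeWord (I : Sentence A) (f : Filling) (v : ℕ) : List A :=
  ((I.zip f).map (fun p => rowWith p.1 p.2 v)).flatten

/-- The monomial `x_T` of a colored row-strict immaculate tableau. -/
def rsMonoOf (I : Sentence A) (f : Filling) : Mono A :=
  let vs := ((List.range (maxEntry f)).map (· + 1)).filter (fun v => !(rsTypeWord I f v).isEmpty)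
  (vs.map (rsTypeWord I f), vs)

/-- The colored row-strict dual immaculate function `ℛ𝔖*_J = Σ_T x_T`, summed over all
colored row-strict immaculate tableaux `T` of shape `J`. -/
noncomputable def rsDualImm (J : Sentence A) : QSymA A := fun m =>
  (Set.ncard {f : Filling | IsCRSIT J f ∧ rsMonoOf J f = m} : ℚ)

/-- `α ⪰ β` in the reverse lexicographic order on compositions: at the first index where
they differ, `α` has the *smaller* entry (padding with zeros). -/
def RevLexGE (α β : List ℕ) : Prop :=
  α = β ∨ ∃ i, (∀ j < i, α.getD j 0 = β.getD j 0) ∧ α.getD i 0 < β.getD i 0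

/-! ### Uncolored (ordinary) versions, for `QSym` -/

namespace Uncolored

/-- A composition: a list of positive integers. -/
def IsComposition (α : List ℕ) : Prop := ∀ a ∈ α, 1 ≤ a

/-- `β ⪯ α`: the composition `α` is obtained by summing adjacent parts of `β`. -/
def RefinesC (β α : List ℕ) : Prop :=
  ∃ P : List (List ℕ), (∀ p ∈ P, p ≠ []) ∧ P.flatten = β ∧ P.map List.sum = α

/-- A monomial `x_{i_1}^{a_1} ⋯ x_{i_m}^{a_m}` recorded by its exponents and its
strictly increasing positive indices. -/
abbrev MonoU := List ℕ × List ℕ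

/-- A quasisymmetric "series", recorded by its coefficient function on monomials.
`QSym` is the span of the monomial functions `MU α` inside this space. -/
abbrev QSymU := MonoU → ℚ

/-- Validity of a monomial: matching lengths, strictly increasing positive indices,
positive exponents. -/
def ValidMonoU (m : MonoU) : Prop :=
  m.1.length = m.2.length ∧ m.2.Chain' (· < ·) ∧ (∀ j ∈ m.2, 1 ≤ j) ∧ ∀ a ∈ m.1, 1 ≤ a

open Classical in
/-- The monomial quasisymmetric function `M_α`. -/
noncomputable def MU (α : List ℕ) : QSymU := fun m =>
  if m.1 = α ∧ ValidMonoU m then 1 else 0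

/-- The fundamental quasisymmetric function `F_α = Σ_{β ⪯ α} M_β`. -/
noncomputable def FU (α : List ℕ) : QSymU :=
  ∑ᶠ β ∈ {β : List ℕ | RefinesC β α}, MU β

/-- An immaculate tableau of shape `α`: positive integer entries, rows weakly increasing
left to right, first column strictly increasing top to bottom. -/
def IsIT (α : List ℕ) (f : Filling) : Prop :=
  f.map List.length = α ∧
  (∀ row ∈ f, row.Chain' (· ≤ ·)) ∧
  (f.filterMap List.head?).Chain' (· < ·) ∧
  (∀ x ∈ f.flatten, 1 ≤ x)

/-- The number of boxes of `f` with entry `v`. -/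
def countOf (f : Filling) (v : ℕ) : ℕ := (f.flatten.filter (fun x => x == v)).length

/-- The monomial `x^T` of an immaculate tableau `T` of type `β`:
`x_1^{β_1} ⋯ x_h^{β_h}` (zero exponents skipped). -/
def monoOfU (f : Filling) : MonoU :=
  let vs := ((List.range (maxEntry f)).map (· + 1)).filter (fun v => decide (countOf f v ≠ 0))
  (vs.map (countOf f), vs)

/-- The dual immaculate function `𝔖*_α = Σ_T x^T`, summed over all immaculate tableaux
of shape `α`. -/
noncomputable def dualImmU (α : List ℕ) : QSymU := fun m =>
  (Set.ncard {f : Filling | IsIT α f ∧ monoOfU f = m} : ℚ)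

/-- The descent composition `co(U)` of a standard immaculate tableau. -/
def descComp (f : Filling) : List ℕ :=
  if nBoxes f = 0 then [] else compOf (descList f) (nBoxes f)

/-- `L_{α,β}`: the number of standard immaculate tableaux of shape `α` with descent
composition `β`. -/
noncomputable def LU (α β : List ℕ) : ℕ :=
  Set.ncard {f : Filling | IsIT α f ∧ IsStandardF f ∧ descComp f = β}

/-- Edges of the immaculate descent graph `𝔇^n`. -/
def IsEdgeU (α β : List ℕ) : Prop := β ≠ α ∧ LU α β ≠ 0

/-- Directed paths from `α` to `β` in the immaculate descent graph, recorded by their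
lists of successive vertices; `[α]` is the empty path at `α`. -/
def PathsU (α β : List ℕ) : Set (List (List ℕ)) :=
  {p | p.head? = some α ∧ p.getLast? = some β ∧ p.Chain' IsEdgeU}

/-- The signed weight `(-1)^{ℓ(𝒫)} prod(𝒫)` of a path. -/
noncomputable def pathWeightU (p : List (List ℕ)) : ℚ :=
  ((-1 : ℚ)) ^ (p.length - 1) * ((p.zip p.tail).map (fun e => (LU e.1 e.2 : ℚ))).prod

/-- `L⁻¹_{α,β} = Σ_𝒫 (-1)^{ℓ(𝒫)} prod(𝒫)`, over directed paths from `α` to `β` in `𝔇^n`. -/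
noncomputable def LinvU (α β : List ℕ) : ℚ :=
  ∑ᶠ p ∈ PathsU α β, pathWeightU p

end Uncolored

end ColoredImm

namespace ColoredImm

/-- The list of word indices of a sentence: `|w_1|` copies of `s`, `|w_2|` copies of `s+1`, ... -/
def pl {A : Type*} : ℕ → Sentence A → List ℕ
  | _, [] => []
  | s, w :: B => List.replicate w.length s ++ pl (s + 1) B

theorem pl_length {A : Type*} (s : ℕ) (B : Sentence A) : (pl s B).length = B.flatten.length := by
  induction B generalizing s with
  | nil => simp [pl]
  | cons w B ih => simp [pl, ih]

theorem pl_ge {A : Type*} (s : ℕ) (B : Sentence A) : ∀ x ∈ pl s B, s ≤ x := by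
  induction B generalizing s with
  | nil => simp [pl]
  | cons w B ih =>
    intro x hx
    simp only [pl, List.mem_append, List.mem_replicate] at hx
    rcases hx with ⟨_, rfl⟩ | hx
    · exact le_rfl
    · have := ih _ _ hx; omega

theorem pl_pairwise {A : Type*} (s : ℕ) (B : Sentence A) : (pl s B).Pairwise (· ≤ ·) := by
  induction B generalizing s with
  | nil => simp [pl]
  | cons w B ih =>
    simp only [pl, List.pairwise_append]
    refine ⟨by simp [List.pairwise_replicate], ih _, ?_⟩
    intro a ha b hb
    have := pl_ge _ _ _ hb
    rw [List.mem_replicate] at ha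
    omega

theorem rowWith_append {A : Type*} (w w' : List A) (r r' : List ℕ) (v : ℕ)
    (h : w.length = r.length) :
    rowWith (w ++ w') (r ++ r') v = rowWith w r v ++ rowWith w' r' v := by
  simp [rowWith, List.zip_append h]

theorem rowWith_replicate {A : Type*} (w : List A) (s v : ℕ) :
    rowWith w (List.replicate w.length s) v = if s = v then w else [] := by
  induction w with
  | nil => simp [rowWith]
  | cons a w ih =>
    simp only [rowWith] at ih
    by_cases h : s = v
    · subst h; simpa [rowWith, List.replicate_succ] using ih
    · simp [h] at ih
      simp [rowWith, List.replicate_succ, h]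
      simpa using ih

theorem rowWith_nil_of {A : Type*} (w : List A) (r : List ℕ) (v : ℕ) (h : v ∉ r) :
    rowWith w r v = [] := by
  simp only [rowWith, List.map_eq_nil_iff, List.filter_eq_nil_iff]
  rintro ⟨a, b⟩ hab
  have := (List.of_mem_zip hab).2
  simp; rintro rfl; exact h this

theorem rowWith_pl {A : Type*} (s : ℕ) (B : Sentence A) (v : ℕ) (hv : s ≤ v) :
    rowWith B.flatten (pl s B) v = B.getD (v - s) [] := by
  induction B generalizing s with
  | nil => simp [rowWith]
  | cons w B ih =>
    rw [List.flatten_cons, pl, rowWith_append _ _ _ _ _ (by simp), rowWith_replicate]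
    by_cases h : s = v
    · subst h
      rw [rowWith_nil_of]
      · simp
      · intro hx; have := pl_ge _ _ _ hx; omega
    · rw [ih (s+1) (by omega)]
      obtain ⟨k, rfl⟩ : ∃ k, v = s + (k+1) := ⟨v - s - 1, by omega⟩
      have e1 : s + (k+1) - (s+1) = k := by omega
      have e2 : s + (k+1) - s = k + 1 := by omega
      rw [e1, e2]; simp

theorem rowWith_unique {A : Type*} (s : ℕ) (ws : List A) : ∀ (ts : List ℕ) (ws' : List A)
    (ts' : List ℕ), ws.length = ts.length → ws'.length = ts'.length →
    ts.Pairwise (· ≤ ·) → ts'.Pairwise (· ≤ ·) → (∀ x ∈ ts, s ≤ x) → (∀ x ∈ ts', s ≤ x) →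
    (∀ v, s ≤ v → rowWith ws ts v = rowWith ws' ts' v) → ws = ws' ∧ ts = ts' := by
  induction ws with
  | nil =>
    intro ts ws' ts' h1 h2 _ _ _ h6 h
    cases ts with
    | cons _ _ => simp at h1
    | nil =>
      cases ts' with
      | nil => simp at h2; simp [h2]
      | cons t ts' =>
        cases ws' with
        | nil => simp at h2
        | cons a ws' =>
          have := h t (h6 t (by simp))
          simp [rowWith] at this
  | cons a ws ih =>
    intro ts ws' ts' h1 h2 h3 h4 h5 h6 h
    cases ts with
    | nil => simp at h1
    | cons t ts =>
      cases ts' with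
      | nil =>
        have := h t (h5 t (by simp))
        simp [rowWith] at this
      | cons t' ts' =>
        cases ws' with
        | nil => simp at h2
        | cons a' ws' =>
          rw [List.pairwise_cons] at h3 h4
          have htt : t = t' := by
            rcases lt_trichotomy t t' with hlt | he | hlt
            · have := h t (h5 t (by simp))
              rw [rowWith_nil_of (a' :: ws') (t' :: ts')] at this
              · simp [rowWith] at this
              · intro hx
                rcases List.mem_cons.1 hx with hx | hx
                · omega
                · have := h4.1 _ hx; omega
            · exact he
            · have := h t' (h6 t' (by simp))
              rw [rowWith_nil_of (a :: ws) (t :: ts)] at this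
              · simp [rowWith] at this
              · intro hx
                rcases List.mem_cons.1 hx with hx | hx
                · omega
                · have := h3.1 _ hx; omega
          subst htt
          have ha : a = a' := by
            have := h t (h5 t (by simp))
            simp [rowWith] at this
            exact this.1
          subst ha
          have := ih ts ws' ts' (by simpa using h1) (by simpa using h2) h3.2 h4.2
            (fun x hx => h5 x (by simp [hx])) (fun x hx => h6 x (by simp [hx])) ?_
          · simp [this]
          · intro v hv
            have := h v hv
            by_cases hvt : t = v
            · subst hvt; simpa [rowWith] using this
            · simpa [rowWith, hvt] using this

theorem type_iff {A : Type*} (ws : List A) (ts : List ℕ) (B : Sentence A)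
    (hl : ws.length = ts.length) (hs : ts.Pairwise (· ≤ ·)) (hp : ∀ x ∈ ts, 1 ≤ x) :
    (∀ v, 1 ≤ v → rowWith ws ts v = B.getD (v - 1) []) ↔ ws = B.flatten ∧ ts = pl 1 B := by
  constructor
  · intro h
    refine rowWith_unique 1 ws ts _ _ hl (pl_length 1 B).symm hs (pl_pairwise 1 B) hp (pl_ge 1 B) ?_
    intro v hv
    rw [h v hv, rowWith_pl 1 B v hv]
  · rintro ⟨rfl, rfl⟩ v hv
    exact rowWith_pl 1 B v hv

theorem refines_singleton {A : Type*} (B : Sentence A) (w : List A) :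
    Refines B [w] ↔ B ≠ [] ∧ B.flatten = w := by
  constructor
  · rintro ⟨P, h1, h2, h3⟩
    obtain ⟨p, rfl, hp⟩ := List.map_eq_singleton_iff.1 h3
    simp at h1 h2
    subst h2
    exact ⟨h1, hp⟩
  · rintro ⟨h, rfl⟩
    exact ⟨[B], by simpa using h, by simp, by simp⟩

theorem refines_cons {A : Type*} (B C : Sentence A) (w : List A) :
    Refines B (w :: C) ↔ ∃ k, 0 < k ∧ k ≤ B.length ∧ (B.take k).flatten = w ∧
      Refines (B.drop k) C := by
  constructor
  · rintro ⟨P, h1, h2, h3⟩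
    cases P with
    | nil => simp at h3
    | cons p P =>
      simp at h1 h2 h3
      subst h2
      refine ⟨p.length, List.length_pos_iff.2 h1.1, by simp, by simpa using h3.1, P, h1.2, ?_, h3.2⟩
      simp
  · rintro ⟨k, hk, hk', rfl, P, h1, h2, h3⟩
    refine ⟨B.take k :: P, ?_, by simp [h2], by simp [h3]⟩
    intro p hp
    rcases List.mem_cons.1 hp with rfl | hp
    · intro h
      have := congrArg List.length h
      simp at this
      have : B.length = 0 ∨ k = 0 := by rcases this with h | h <;> simp_all
      omega
    · exact h1 p hp

/-- length of the first `k` words -/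
def pre {A : Type*} (B : Sentence A) (k : ℕ) : ℕ := (B.take k).flatten.length

theorem pre_add {A : Type*} (B : Sentence A) (k m : ℕ) :
    pre B (k + m) = pre B k + pre (B.drop k) m := by
  simp only [pre, List.take_add, List.flatten_append, List.length_append]

theorem refines_split {A : Type*} (ds : List ℕ) : ∀ (a n : ℕ) (w : List A) (B : Sentence A),
    (a :: (ds ++ [n])).Pairwise (· < ·) → w.length = n - a →
    (Refines B (splitByComp w (List.zipWith (fun a b => b - a) (a :: ds) (ds ++ [n]))) ↔
      w = B.flatten ∧ ∀ d ∈ ds, ∃ k, a + pre B k = d) := by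
  induction ds with
  | nil =>
    intro a n w B h hw
    simp at h
    simp only [List.nil_append, List.zipWith_cons_cons, List.zipWith_nil_right, splitByComp]
    rw [← hw, List.take_length, refines_singleton]
    simp only [List.not_mem_nil, false_imp_iff, implies_true, and_true]
    constructor
    · rintro ⟨_, rfl⟩; rfl
    · rintro rfl
      refine ⟨?_, rfl⟩
      rintro rfl
      simp at hw; omega
  | cons d ds ih =>
    intro a n w B h hw
    rw [List.cons_append, List.pairwise_cons] at h
    have had : a < d := h.1 d (by simp)
    have hdn : d < n := (List.pairwise_cons.1 h.2).1 n (by simp)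
    simp only [List.cons_append, List.zipWith_cons_cons, splitByComp]
    rw [refines_cons]
    have IH := fun k => ih d n (w.drop (d - a)) (B.drop k) h.2 (by simp; omega)
    simp only [IH]
    constructor
    · rintro ⟨k, hk, hk', h1, h2, h3⟩
      have hw' : w = B.flatten := by
        rw [← List.take_append_drop (d-a) w, ← h1, h2, ← List.flatten_append,
          List.take_append_drop]
      have hpk : a + pre B k = d := by
        rw [pre, h1, List.length_take]; omega
      refine ⟨hw', ?_⟩
      intro d' hd'
      rcases List.mem_cons.1 hd' with rfl | hd'
      · exact ⟨k, hpk⟩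
      · obtain ⟨m, hm⟩ := h3 d' hd'
        refine ⟨k + m, ?_⟩
        rw [pre_add]; omega
    · rintro ⟨hwB, h3⟩
      obtain ⟨k0, hk0⟩ := h3 d (by simp)
      obtain ⟨k, hkl, hk⟩ : ∃ k, k ≤ B.length ∧ a + pre B k = d := by
        rcases le_total k0 B.length with h | h
        · exact ⟨k0, h, hk0⟩
        · refine ⟨B.length, le_rfl, ?_⟩
          rw [pre, List.take_of_length_le h] at hk0
          rw [pre, List.take_of_length_le le_rfl]; exact hk0
      have hsp : w = (B.take k).flatten ++ (B.drop k).flatten := by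
        rw [← List.flatten_append, List.take_append_drop, hwB]
      have hlen : (B.take k).flatten.length = d - a := by
        rw [pre] at hk; omega
      refine ⟨k, ?_, hkl, ?_, ?_, ?_⟩
      · rcases Nat.eq_zero_or_pos k with rfl | h
        · simp [pre] at hk; omega
        · exact h
      · rw [hsp, ← hlen, List.take_left]
      · rw [hsp, ← hlen, List.drop_left]
      · intro d' hd'
        have hdd : d < d' := (List.pairwise_cons.1 h.2).1 d' (by simp [hd'])
        obtain ⟨k', hk'⟩ := h3 d' (by simp [hd'])
        have hkk : k ≤ k' := by
          by_contra hc
          push Not at hc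
          obtain ⟨m, rfl⟩ := Nat.exists_eq_add_of_lt hc
          rw [add_assoc, pre_add] at hk
          omega
        obtain ⟨m, rfl⟩ := Nat.exists_eq_add_of_le hkk
        refine ⟨m, ?_⟩
        rw [pre_add] at hk'; omega

theorem pre_iff_pl {A : Type*} (B : Sentence A) : ∀ (s d : ℕ), 0 < d → d < B.flatten.length →
    ((∃ k, pre B k = d) ↔ (pl s B).getD (d - 1) 0 < (pl s B).getD d 0) := by
  induction B with
  | nil => intro s d _ h; simp at h
  | cons w B ih =>
    intro s d hd hdn
    rw [List.flatten_cons, List.length_append] at hdn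
    have hlow : ∀ i, i < w.length → (pl s (w :: B)).getD i 0 = s := by
      intro i hi
      rw [pl, List.getD_append _ _ _ _ (by simpa using hi)]
      rw [List.getD_eq_getElem _ _ (by simpa using hi)]; simp
    have hhigh : ∀ i, w.length ≤ i → (pl s (w :: B)).getD i 0 = (pl (s+1) B).getD (i - w.length) 0 := by
      intro i hi
      rw [pl, List.getD_append_right _ _ _ _ (by simpa using hi)]; simp
    have hpre : ∀ k, pre (w :: B) (k+1) = w.length + pre B k := by
      intro k; simp [pre]
    rcases lt_trichotomy d w.length with h | h | h
    · rw [hlow _ h, hlow _ (by omega)]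
      simp only [lt_irrefl, iff_false, not_exists]
      intro k hk
      cases k with
      | zero => simp [pre] at hk; omega
      | succ k => rw [hpre] at hk; omega
    · rw [hlow _ (by omega), hhigh _ (by omega)]
      refine iff_of_true ⟨1, by rw [hpre]; simp [pre, h]⟩ ?_
      have hl : d - w.length < (pl (s+1) B).length := by rw [pl_length]; omega
      rw [List.getD_eq_getElem _ _ hl]
      have := pl_ge (s+1) B _ (List.getElem_mem hl)
      omega
    · rw [hhigh _ (by omega), hhigh _ (by omega)]
      have e : d - 1 - w.length = (d - w.length) - 1 := by omega
      rw [e, ← ih (s+1) (d - w.length) (by omega) (by omega)]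
      constructor
      · rintro ⟨k, hk⟩
        cases k with
        | zero => simp [pre] at hk; omega
        | succ k => rw [hpre] at hk; exact ⟨k, by omega⟩
      · rintro ⟨k, hk⟩
        exact ⟨k+1, by rw [hpre]; omega⟩

theorem refines_coA {A : Type*} [Inhabited A] (J B : Sentence A) (f : Filling) :
    Refines B (coA J f) ∧ IsSentence B ↔ IsSentence B ∧ readWord J f = B.flatten ∧
      ∀ i, 1 ≤ i → i + 1 ≤ nBoxes f → rowOf f i < rowOf f (i+1) →
        (pl 1 B).getD (i - 1) 0 < (pl 1 B).getD i 0 := by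
  rw [and_comm]
  refine and_congr_right fun hB => ?_
  have hlen : (readWord J f).length = nBoxes f := by simp [readWord]
  unfold coA
  split_ifs with h0
  · have hr : readWord J f = [] := List.length_eq_zero_iff.1 (by omega)
    rw [hr]
    constructor
    · rintro ⟨P, h1, h2, h3⟩
      simp at h3; subst h3; simp at h2; subst h2
      refine ⟨by simp, ?_⟩
      intro i _ _; omega
    · rintro ⟨h, -⟩
      have : B = [] := by
        cases B with
        | nil => rfl
        | cons w B => simp at h; exact absurd h.1 (hB w (by simp))
      subst this
      exact ⟨[], by simp, by simp, by simp⟩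
  · unfold compOf
    rw [refines_split]
    · refine and_congr_right fun hw => ?_
      have hlB : B.flatten.length = nBoxes f := by rw [← hw, hlen]
      simp only [descList, List.mem_filter, List.mem_range'_1, decide_eq_true_eq, zero_add]
      constructor
      · intro h i h1 h2 h3
        rw [← pre_iff_pl B 1 i (by omega) (by omega)]
        exact h i ⟨⟨h1, by omega⟩, h3⟩
      · rintro h i ⟨⟨h1, h2⟩, h3⟩
        rw [pre_iff_pl B 1 i (by omega) (by omega)]
        exact h i h1 (by omega) h3
    · rw [List.pairwise_cons, List.pairwise_append]
      have hm : ∀ x ∈ descList f, 1 ≤ x ∧ x < nBoxes f := by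
        intro x hx
        simp only [descList, List.mem_filter, List.mem_range'_1] at hx
        omega
      refine ⟨?_, ?_, by simp, ?_⟩
      · intro x hx
        rcases List.mem_append.1 hx with hx | hx
        · have := hm x hx; omega
        · simp at hx; omega
      · exact List.Pairwise.filter _ (List.pairwise_lt_range' (s := 1) )
      · intro x hx y hy
        simp at hy; subst hy; exact (hm x hx).2
    · rw [hlen]; rfl

/-! ### Boxes and entries -/

theorem mem_boxes (f : Filling) (b : ℕ × ℕ) : b ∈ boxes f ↔ b.2 < (f.getD b.1 []).length := by
  obtain ⟨r, j⟩ := b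
  simp only [boxes, List.mem_flatten, List.mem_map, List.mem_range]
  constructor
  · rintro ⟨_, ⟨r', hr', rfl⟩, h⟩
    simp only [List.mem_map, List.mem_range, Prod.mk.injEq] at h
    obtain ⟨j', hj', rfl, rfl⟩ := h
    exact hj'
  · intro h
    have hr : r < f.length := by
      by_contra hc
      simp [List.getD, List.getElem?_eq_none (not_lt.1 hc)] at h
    exact ⟨_, ⟨r, hr, rfl⟩, by simpa using h⟩

theorem boxes_nodup (f : Filling) : (boxes f).Nodup := by
  rw [boxes, List.nodup_flatten]
  constructor
  · intro l hl
    simp only [List.mem_map] at hl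
    obtain ⟨r, _, rfl⟩ := hl
    refine List.Nodup.map ?_ List.nodup_range
    intro a b h; simpa using h
  · rw [List.pairwise_map]
    refine List.Pairwise.imp ?_ (List.nodup_range (n := f.length))
    intro a b hab x hx hy
    simp only [List.mem_map] at hx hy
    obtain ⟨_, _, rfl⟩ := hx
    obtain ⟨_, _, h⟩ := hy
    simp at h
    exact hab h.1.symm

theorem map_range_getD {α : Type*} (l : List α) (d : α) :
    (List.range l.length).map (fun i => l.getD i d) = l := by
  apply List.ext_getElem
  · simp
  · intro i h1 h2
    simp at h1
    simp [h1]

theorem flatten_eq (f : Filling) : f.flatten = (boxes f).map (entryAt f) := by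
  rw [boxes, List.map_flatten, List.map_map]
  congr 1
  conv_lhs => rw [← map_range_getD f []]
  apply List.map_congr_left
  intro r _
  simp only [Function.comp, List.map_map]
  exact (map_range_getD _ 0).symm

theorem shape_len {α β : Type*} {f : List (List α)} {g : List (List β)}
    (h : f.map List.length = g.map List.length) : f.length = g.length := by
  simpa using congrArg List.length h

theorem shape_row {α β : Type*} {f : List (List α)} {g : List (List β)}
    (h : f.map List.length = g.map List.length) (r : ℕ) :
    (f.getD r []).length = (g.getD r []).length := by
  have := congrArg (fun l => l.getD r 0) h
  simp only [List.getD_eq_getElem?_getD, List.getElem?_map] at this ⊢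
  cases hf : f[r]? <;> cases hg : g[r]? <;> simp_all

theorem boxes_congr {f g : Filling} (h : f.map List.length = g.map List.length) :
    boxes f = boxes g := by
  simp only [boxes, shape_row h, shape_len h]

theorem fill_ext {f g : Filling} (h : f.map List.length = g.map List.length)
    (he : ∀ b ∈ boxes f, entryAt f b = entryAt g b) : f = g := by
  rw [List.eq_iff_flatten_eq]
  refine ⟨?_, h⟩
  rw [flatten_eq, flatten_eq, ← boxes_congr h]
  exact List.map_congr_left he

theorem nBoxes_eq (f : Filling) : nBoxes f = (boxes f).length := by
  rw [nBoxes, flatten_eq, List.length_map]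

/-- position of the value `v` -/
def posOf (f : Filling) (v : ℕ) : ℕ × ℕ :=
  (rowOf f v, (f.getD (rowOf f v) []).findIdx (fun x => x == v))

theorem posOf_spec (f : Filling) (v : ℕ) (h : v ∈ f.flatten) :
    posOf f v ∈ boxes f ∧ entryAt f (posOf f v) = v := by
  obtain ⟨row, hrow, hv⟩ := List.mem_flatten.1 h
  have h1 : rowOf f v < f.length := by
    rw [rowOf, List.findIdx_lt_length]
    exact ⟨row, hrow, by simpa using hv⟩
  have h2 : v ∈ f.getD (rowOf f v) [] := by
    rw [List.getD_eq_getElem _ _ h1]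
    have := List.findIdx_getElem (p := fun row : List ℕ => row.contains v) (xs := f) (w := h1)
    exact List.contains_iff_mem.1 this
  have h3 : (f.getD (rowOf f v) []).findIdx (fun x => x == v) < (f.getD (rowOf f v) []).length := by
    rw [List.findIdx_lt_length]
    exact ⟨v, h2, by simp⟩
  refine ⟨(mem_boxes _ _).2 h3, ?_⟩
  rw [entryAt, posOf, List.getD_eq_getElem _ _ h3]
  have := List.findIdx_getElem (p := fun x : ℕ => x == v) (xs := f.getD (rowOf f v) []) (w := h3)
  simpa using this

theorem std_mem {f : Filling} (hf : IsStandardF f) (v : ℕ) :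
    v ∈ f.flatten ↔ 1 ≤ v ∧ v ≤ nBoxes f := by
  rw [hf.mem_iff, List.mem_range'_1]; omega

theorem std_inj {f : Filling} (hf : IsStandardF f) {b b' : ℕ × ℕ} (hb : b ∈ boxes f)
    (hb' : b' ∈ boxes f) (h : entryAt f b = entryAt f b') : b = b' := by
  have : ((boxes f).map (entryAt f)).Nodup := by
    rw [← flatten_eq]; exact hf.nodup_iff.2 List.nodup_range'
  exact List.inj_on_of_nodup_map this hb hb' h

theorem entry_mem {f : Filling} {b : ℕ × ℕ} (hb : b ∈ boxes f) : entryAt f b ∈ f.flatten := by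
  rw [flatten_eq]; exact List.mem_map_of_mem hb

theorem posOf_entry {f : Filling} (hf : IsStandardF f) {b : ℕ × ℕ} (hb : b ∈ boxes f) :
    posOf f (entryAt f b) = b := by
  have := posOf_spec f _ (entry_mem hb)
  exact std_inj hf this.1 hb this.2

/-- The boxes of a standard filling in order of their entries. -/
def ordB (f : Filling) : List (ℕ × ℕ) := (List.range (nBoxes f)).map (fun i => posOf f (i + 1))

/-- color of a box -/
def colB {A : Type*} [Inhabited A] (I : Sentence A) (b : ℕ × ℕ) : A :=
  (I.getD b.1 []).getD b.2 default

theorem readWord_eq {A : Type*} [Inhabited A] (I : Sentence A) (f : Filling) :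
    readWord I f = (ordB f).map (colB I) := by
  simp only [readWord, ordB, List.map_map]
  rfl

theorem mem_ordB {f : Filling} (hf : IsStandardF f) (b : ℕ × ℕ) : b ∈ ordB f ↔ b ∈ boxes f := by
  simp only [ordB, List.mem_map, List.mem_range]
  constructor
  · rintro ⟨i, hi, rfl⟩
    exact (posOf_spec f _ ((std_mem hf _).2 (by omega))).1
  · intro hb
    have := (std_mem hf _).1 (entry_mem hb)
    refine ⟨entryAt f b - 1, by omega, ?_⟩
    rw [Nat.sub_add_cancel this.1, posOf_entry hf hb]

theorem ordB_pairwise {f : Filling} (hf : IsStandardF f) :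
    (ordB f).Pairwise (fun b b' => entryAt f b < entryAt f b') := by
  rw [ordB, List.pairwise_map]
  refine List.Pairwise.imp_of_mem ?_ (List.pairwise_lt_range (n := nBoxes f))
  intro a b ha hb hab
  rw [List.mem_range] at ha hb
  rw [(posOf_spec f (a+1) ((std_mem hf _).2 (by omega))).2,
    (posOf_spec f (b+1) ((std_mem hf _).2 (by omega))).2]
  omega

/-! ### Pointwise description of tableaux -/

theorem isCIT_iff {A : Type*} {J : Sentence A} (hJ : IsSentence J) (f : Filling) :
    IsCIT J f ↔ f.map List.length = J.map List.length ∧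
      (∀ r j j', j < j' → (r, j') ∈ boxes f → entryAt f (r, j) ≤ entryAt f (r, j')) ∧
      (∀ r, (r + 1, 0) ∈ boxes f → entryAt f (r, 0) < entryAt f (r + 1, 0)) ∧
      (∀ b ∈ boxes f, 1 ≤ entryAt f b) := by
  unfold IsCIT
  refine and_congr_right fun hsh => ?_
  refine and_congr ?_ (and_congr ?_ ?_)
  · constructor
    · intro h r j j' hj hb
      rw [mem_boxes] at hb
      simp only at hb
      have hr : r < f.length := by
        by_contra hc
        simp [List.getD, List.getElem?_eq_none (not_lt.1 hc)] at hb
      have hm : f.getD r [] ∈ f := by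
        rw [List.getD_eq_getElem _ _ hr]; exact List.getElem_mem hr
      have := List.isChain_iff_pairwise.1 (h _ hm)
      rw [List.pairwise_iff_getElem] at this
      simp only [entryAt]
      rw [List.getD_eq_getElem _ _ hb, List.getD_eq_getElem _ _ (hj.trans hb)]
      exact this _ _ _ _ hj
    · intro h row hrow
      obtain ⟨r, hr, rfl⟩ := List.getElem_of_mem hrow
      refine List.isChain_iff_getElem.2 ?_
      intro i hi
      have := h r i (i+1) (by omega) ((mem_boxes _ _).2 (by simpa [hr] using hi))
      simp only [entryAt] at this
      rw [List.getD_eq_getElem _ _ hr, List.getD_eq_getElem _ _ hi,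
        List.getD_eq_getElem _ _ (by omega)] at this
      exact this
  · have hne : ∀ row ∈ f, row ≠ [] := by
      intro row hrow he
      subst he
      have : 0 ∈ f.map List.length := List.mem_map.2 ⟨[], hrow, rfl⟩
      rw [hsh] at this
      obtain ⟨w, hw, hw0⟩ := List.mem_map.1 this
      exact hJ w hw (List.length_eq_zero_iff.1 hw0)
    have hfm : ∀ f : Filling, (∀ row ∈ f, row ≠ []) →
        f.filterMap List.head? = f.map (fun row => row.getD 0 0) := by
      intro f
      induction f with
      | nil => simp
      | cons row f ih =>
        intro h
        cases row with
        | nil => exact absurd rfl (h [] (by simp))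
        | cons a row =>
          have := ih (fun r hr => h r (by simp [hr]))
          simpa using this
    rw [hfm f hne]
    show List.IsChain _ _ ↔ _
    rw [List.isChain_iff_getElem]
    constructor
    · intro h r hb
      rw [mem_boxes] at hb
      simp only at hb
      have hr : r + 1 < f.length := by
        by_contra hc
        simp [List.getD, List.getElem?_eq_none (not_lt.1 hc)] at hb
      have := h r (by simpa using hr)
      simp only [List.getElem_map] at this
      simp only [entryAt]
      rw [List.getD_eq_getElem _ _ hr, List.getD_eq_getElem f _ (by omega : r < f.length)]
      exact this
    · intro h r hr
      simp at hr
      have := h r ((mem_boxes _ _).2 (by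
        simp only
        rw [List.getD_eq_getElem _ _ hr]
        exact List.length_pos_iff.2 (hne _ (List.getElem_mem hr))))
      simp only [entryAt] at this
      rw [List.getD_eq_getElem _ _ hr, List.getD_eq_getElem f _ (by omega : r < f.length)] at this
      simpa using this
  · rw [flatten_eq, List.forall_mem_map]

/-! ### The standardization -/

theorem beforeB_iff (f : Filling) (b b' : ℕ × ℕ) : beforeB f b b' = true ↔
    entryAt f b < entryAt f b' ∨ (entryAt f b = entryAt f b' ∧
      (b'.1 < b.1 ∨ (b.1 = b'.1 ∧ b.2 < b'.2))) := by
  simp [beforeB]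

theorem beforeB_irrefl (f : Filling) (b : ℕ × ℕ) : ¬ beforeB f b b = true := by
  rw [beforeB_iff]; omega

theorem beforeB_trans (f : Filling) {a b c : ℕ × ℕ} (h : beforeB f a b = true)
    (h' : beforeB f b c = true) : beforeB f a c = true := by
  rw [beforeB_iff] at *; omega

theorem beforeB_total (f : Filling) {a b : ℕ × ℕ} (h : a ≠ b) :
    beforeB f a b = true ∨ beforeB f b a = true := by
  have : a.1 ≠ b.1 ∨ a.2 ≠ b.2 := by
    by_contra hc
    push Not at hc
    exact h (Prod.ext hc.1 hc.2)
  rw [beforeB_iff, beforeB_iff]; omega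

/-- `g` is standard, of the same shape as `T`, ordered by the reading order of `T`. -/
def Compat (T g : Filling) : Prop :=
  g.map List.length = T.map List.length ∧ IsStandardF g ∧
    ∀ b ∈ boxes g, ∀ b' ∈ boxes g, (entryAt g b < entryAt g b' ↔ beforeB T b b' = true)

theorem std_shape (T : Filling) : (stdFill T).map List.length = T.map List.length := by
  rw [stdFill, List.map_map]
  conv_rhs => rw [← map_range_getD T []]
  rw [List.map_map]
  apply List.map_congr_left
  intro r _
  simp

theorem std_entry (T : Filling) (b : ℕ × ℕ) (hb : b ∈ boxes T) :
    entryAt (stdFill T) b = 1 + ((boxes T).filter (fun b' => beforeB T b' b)).length := by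
  rw [mem_boxes] at hb
  have hr : b.1 < T.length := by
    by_contra hc
    simp [List.getD, List.getElem?_eq_none (not_lt.1 hc)] at hb
  have e1 : (stdFill T).getD b.1 [] = (List.range (T.getD b.1 []).length).map (fun j =>
      1 + ((boxes T).filter (fun b' => beforeB T b' (b.1, j))).length) := by
    rw [stdFill, List.getD_eq_getElem _ _ (by simpa using hr)]
    simp only [List.getElem_map, List.getElem_range]
  rw [entryAt, e1, List.getD_eq_getElem _ _ (by simpa using hb)]
  simp only [List.getElem_map, List.getElem_range]

theorem filter_length_lt {α : Type*} (l : List α) (p q : α → Bool) (hpq : ∀ x, p x = true → q x = true)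
    (a : α) (ha : a ∈ l) (hp : ¬ p a = true) (hq : q a = true) :
    (l.filter p).length < (l.filter q).length := by
  induction l with
  | nil => simp at ha
  | cons x l ih =>
    have hle : (l.filter p).length ≤ (l.filter q).length := by
      rw [← List.countP_eq_length_filter, ← List.countP_eq_length_filter]
      exact List.countP_mono_left (fun x _ => hpq x)
    rcases List.mem_cons.1 ha with rfl | ha
    · simp [hp, hq]; omega
    · have := ih ha
      by_cases h1 : p x = true
      · simp [h1, hpq x h1]; omega
      · by_cases h2 : q x = true
        · simp [h1, h2]; omega
        · simp [h1, h2]; omega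

theorem std_lt (T : Filling) {b b' : ℕ × ℕ} (hb : b ∈ boxes T) (hb' : b' ∈ boxes T)
    (h : beforeB T b b' = true) : entryAt (stdFill T) b < entryAt (stdFill T) b' := by
  rw [std_entry T b hb, std_entry T b' hb']
  have := filter_length_lt (boxes T) (fun x => beforeB T x b) (fun x => beforeB T x b')
    (fun x hx => beforeB_trans T hx h) b hb (beforeB_irrefl T b) h
  omega

theorem std_compat (T : Filling) : Compat T (stdFill T) := by
  have hbx := boxes_congr (std_shape T)
  refine ⟨std_shape T, ?_, ?_⟩
  · have hnd : (stdFill T).flatten.Nodup := by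
      rw [flatten_eq, hbx]
      refine List.Nodup.map_on ?_ (boxes_nodup T)
      intro x hx y hy hxy
      by_contra hne
      rcases beforeB_total T hne with h | h
      · have := std_lt T hx hy h; omega
      · have := std_lt T hy hx h; omega
    refine (hnd.subperm ?_).perm_of_length_le (by simp [nBoxes])
    intro v hv
    rw [flatten_eq, hbx] at hv
    obtain ⟨b, hb, rfl⟩ := List.mem_map.1 hv
    rw [List.mem_range'_1, std_entry T b hb, nBoxes_eq, hbx]
    have := filter_length_lt (boxes T) (fun x => beforeB T x b) (fun _ => true)
      (fun _ _ => rfl) b hb (beforeB_irrefl T b) rfl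
    simp at this
    simp; omega
  · intro b hb b' hb'
    rw [hbx] at hb hb'
    refine ⟨fun h => ?_, std_lt T hb hb'⟩
    have hne : b ≠ b' := by rintro rfl; omega
    rcases beforeB_total T hne with h1 | h1
    · exact h1
    · have := std_lt T hb' hb h1; omega

theorem countP_range' (n m : ℕ) (h1 : 1 ≤ m) (h2 : m ≤ n) :
    (List.range' 1 n).countP (fun x => decide (x < m)) = m - 1 := by
  obtain ⟨k, rfl⟩ : ∃ k, n = (m - 1) + k := ⟨n - (m-1), by omega⟩
  rw [← List.range'_append_1, List.countP_append, List.countP_eq_length.2, List.countP_eq_zero.2]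
  · simp
  · intro a ha; rw [List.mem_range'_1] at ha; simp; omega
  · intro a ha; rw [List.mem_range'_1] at ha; simp; omega

theorem compat_unique {T g : Filling} (h : Compat T g) : stdFill T = g := by
  obtain ⟨h1, h2, h3⟩ := h
  have hbx := boxes_congr h1
  refine fill_ext ((std_shape T).trans h1.symm) ?_
  intro b hb
  rw [boxes_congr (std_shape T)] at hb
  have hbg : b ∈ boxes g := by rwa [hbx]
  rw [std_entry T b hb, ← hbx]
  have e : (boxes g).filter (fun b' => beforeB T b' b) =
      (boxes g).filter (fun b' => decide (entryAt g b' < entryAt g b)) := by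
    apply List.filter_congr
    intro b' hb'
    rw [Bool.eq_iff_iff, decide_eq_true_eq, h3 b' hb' b hbg]
  have hm := (std_mem h2 _).1 (entry_mem hbg)
  have := countP_range' (nBoxes g) (entryAt g b) hm.1 hm.2
  rw [← h2.countP_eq, flatten_eq, List.countP_map] at this
  rw [e, ← List.countP_eq_length_filter]
  simp only [Function.comp_def] at this
  omega

/-! ### Type words -/

theorem rowWith_map {A α : Type*} (l : List α) (c : α → A) (e : α → ℕ) (v : ℕ) :
    rowWith (l.map c) (l.map e) v = (l.filter (fun b => e b == v)).map c := by
  induction l with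
  | nil => simp [rowWith]
  | cons a l ih =>
    simp only [rowWith] at ih
    by_cases h : e a = v
    · simp [rowWith, h]; simpa using ih
    · simp [rowWith, h]; simpa using ih

/-- boxes with entry `v` in reading order -/
def tbox (T : Filling) (v : ℕ) : List (ℕ × ℕ) :=
  ((List.range T.length).reverse.map (fun r =>
    ((List.range (T.getD r []).length).map (fun j => (r, j))).filter
      (fun b => entryAt T b == v))).flatten

theorem typeWord_tbox {A : Type*} [Inhabited A] {J : Sentence A} {T : Filling}
    (h : T.map List.length = J.map List.length) (v : ℕ) :
    typeWord J T v = (tbox T v).map (colB J) := by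
  have hl := shape_len h
  have hz : J.zip T = (List.range T.length).map (fun r => (J.getD r [], T.getD r [])) := by
    apply List.ext_getElem
    · simp [hl]
    · intro i h1 h2
      simp at h1 h2
      simp [h1]
  rw [typeWord, hz, tbox, List.map_flatten, ← List.map_reverse, List.map_map, List.map_map]
  congr 1
  apply List.map_congr_left
  intro r _
  simp only [Function.comp]
  rw [← rowWith_map]
  congr 1
  · rw [List.map_map, shape_row h r]
    exact (map_range_getD _ _).symm
  · rw [List.map_map]
    exact (map_range_getD _ _).symm

theorem mem_tbox (T : Filling) (v : ℕ) (b : ℕ × ℕ) :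
    b ∈ tbox T v ↔ b ∈ boxes T ∧ entryAt T b = v := by
  simp only [tbox, boxes, List.mem_flatten, List.mem_map, List.mem_reverse]
  constructor
  · rintro ⟨_, ⟨r, hr, rfl⟩, h⟩
    rw [List.mem_filter] at h
    exact ⟨⟨_, ⟨r, hr, rfl⟩, h.1⟩, by simpa using h.2⟩
  · rintro ⟨⟨_, ⟨r, hr, rfl⟩, h⟩, h2⟩
    exact ⟨_, ⟨r, hr, rfl⟩, List.mem_filter.2 ⟨h, by simpa using h2⟩⟩

theorem tbox_pairwise (T : Filling) (v : ℕ) :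
    (tbox T v).Pairwise (fun b b' => beforeB T b b' = true) := by
  have key : (tbox T v).Pairwise (fun b b' => b'.1 < b.1 ∨ (b.1 = b'.1 ∧ b.2 < b'.2)) := by
    rw [tbox, List.pairwise_flatten]
    constructor
    · intro l hl
      obtain ⟨r, _, rfl⟩ := List.mem_map.1 hl
      apply List.Pairwise.filter
      rw [List.pairwise_map]
      refine List.Pairwise.imp ?_ (List.pairwise_lt_range)
      intro a b hab
      exact Or.inr ⟨rfl, hab⟩
    · rw [List.pairwise_map, List.pairwise_reverse]
      refine List.Pairwise.imp ?_ (List.pairwise_lt_range)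
      intro a b hab x hx y hy
      have hx := (List.mem_filter.1 hx).1
      have hy := (List.mem_filter.1 hy).1
      obtain ⟨_, _, rfl⟩ := List.mem_map.1 hx
      obtain ⟨_, _, rfl⟩ := List.mem_map.1 hy
      exact Or.inl hab
  refine List.Pairwise.imp_of_mem ?_ key
  intro a b ha hb hab
  rw [beforeB_iff]
  rw [mem_tbox] at ha hb
  exact Or.inr ⟨ha.2.trans hb.2.symm, hab⟩

theorem compat_before {T g : Filling} (h : Compat T g) :
    (ordB g).Pairwise (fun b b' => beforeB T b b' = true) := by
  refine List.Pairwise.imp_of_mem ?_ (ordB_pairwise h.2.1)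
  intro a b ha hb hab
  rw [mem_ordB h.2.1] at ha hb
  exact (h.2.2 a ha b hb).1 hab

theorem tbox_eq {T g : Filling} (h : Compat T g) (v : ℕ) :
    tbox T v = (ordB g).filter (fun b => entryAt T b == v) := by
  have h1 := tbox_pairwise T v
  have h2 := (compat_before h).filter (fun b => entryAt T b == v)
  have nd : ∀ l : List (ℕ × ℕ), l.Pairwise (fun b b' => beforeB T b b' = true) → l.Nodup := by
    intro l hl
    refine List.Pairwise.imp ?_ hl
    rintro a b hab rfl
    exact beforeB_irrefl T a hab
  refine List.Perm.eq_of_pairwise ?_ h1 h2 ?_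
  · intro a b _ _ hab hba
    exact absurd (beforeB_trans T hab hba) (beforeB_irrefl T a)
  · rw [List.perm_ext_iff_of_nodup (nd _ h1) (nd _ h2)]
    intro b
    rw [mem_tbox, List.mem_filter, mem_ordB h.2.1, boxes_congr h.1]
    simp

theorem hasType_iff {A : Type*} [Inhabited A] {J : Sentence A} {T g : Filling}
    (hs : T.map List.length = J.map List.length) (h : Compat T g)
    (hp : ∀ b ∈ boxes T, 1 ≤ entryAt T b) (B : Sentence A) :
    HasType J T B ↔ readWord J g = B.flatten ∧ (ordB g).map (entryAt T) = pl 1 B := by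
  rw [readWord_eq, ← type_iff]
  · unfold HasType
    simp only [typeWord_tbox hs, tbox_eq h, rowWith_map]
  · simp
  · rw [List.pairwise_map]
    refine List.Pairwise.imp ?_ (compat_before h)
    intro a b hab
    rw [beforeB_iff] at hab
    omega
  · rw [List.forall_mem_map]
    intro b hb
    rw [mem_ordB h.2.1, boxes_congr h.1] at hb
    exact hp b hb

/-! ### The inverse map -/

/-- replace each entry of a standard filling by the index of its word in `B` -/
def unstd {A : Type*} (B : Sentence A) (g : Filling) : Filling :=
  g.map (fun row => row.map (fun x => (pl 1 B).getD (x - 1) 0))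

theorem unstd_shape {A : Type*} (B : Sentence A) (g : Filling) :
    (unstd B g).map List.length = g.map List.length := by
  simp [unstd, Function.comp_def]

theorem unstd_entry {A : Type*} (B : Sentence A) (g : Filling) (b : ℕ × ℕ) (hb : b ∈ boxes g) :
    entryAt (unstd B g) b = (pl 1 B).getD (entryAt g b - 1) 0 := by
  rw [mem_boxes] at hb
  have hr : b.1 < g.length := by
    by_contra hc
    simp [List.getD, List.getElem?_eq_none (not_lt.1 hc)] at hb
  rw [List.getD_eq_getElem _ _ hr] at hb
  have e1 : (unstd B g).getD b.1 [] = (g[b.1]).map (fun x => (pl 1 B).getD (x - 1) 0) := by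
    rw [unstd, List.getD_eq_getElem _ _ (by simpa using hr), List.getElem_map]
  rw [entryAt, e1, entryAt, List.getD_eq_getElem g _ hr,
    List.getD_eq_getElem _ _ (by simpa using hb), List.getElem_map,
    List.getD_eq_getElem (g[b.1]) _ hb]

/-- The property characterizing the standard tableaux counted on the right-hand side. -/
def Good {A : Type*} [Inhabited A] (J B : Sentence A) (g : Filling) : Prop :=
  readWord J g = B.flatten ∧
      ∀ i, 1 ≤ i → i + 1 ≤ nBoxes g → rowOf g i < rowOf g (i+1) →
        (pl 1 B).getD (i - 1) 0 < (pl 1 B).getD i 0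

theorem pl_mono {A : Type*} (B : Sentence A) {i j : ℕ} (hij : i ≤ j) (hj : j < (pl 1 B).length) :
    (pl 1 B).getD i 0 ≤ (pl 1 B).getD j 0 := by
  rcases hij.eq_or_lt with rfl | h
  · exact le_rfl
  · rw [List.getD_eq_getElem _ _ hj, List.getD_eq_getElem _ _ (h.trans hj)]
    exact (List.pairwise_iff_getElem.1 (pl_pairwise 1 B)) _ _ _ _ h

theorem good_rows {A : Type*} [Inhabited A] {J B : Sentence A} {g : Filling} (h : Good J B g)
    (hn : (pl 1 B).length = nBoxes g)
    (i : ℕ) (hi : 1 ≤ i) (k : ℕ) (hk : i + k ≤ nBoxes g)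
    (he : (pl 1 B).getD (i - 1) 0 = (pl 1 B).getD (i + k - 1) 0) :
    rowOf g (i + k) ≤ rowOf g i := by
  induction k with
  | zero => exact le_rfl
  | succ k ih =>
    have h1 := pl_mono B (i := i - 1) (j := i + k - 1) (by omega) (by omega)
    have h2 := pl_mono B (i := i + k - 1) (j := i + (k + 1) - 1) (by omega) (by omega)
    have h3 := ih (by omega) (by omega)
    have h4 : rowOf g (i + k + 1) ≤ rowOf g (i + k) := by
      by_contra hc
      have := h.2 (i + k) (by omega) (by omega) (by omega)
      have e : i + (k + 1) - 1 = i + k := by omega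
      rw [e] at he h2
      omega
    exact h4.trans h3

theorem unstd_compat {A : Type*} [Inhabited A] {J B : Sentence A} (hJ : IsSentence J) {g : Filling}
    (hc : IsCIT J g) (hs : IsStandardF g) (h : Good J B g) : Compat (unstd B g) g := by
  have hn : (pl 1 B).length = nBoxes g := by
    rw [pl_length, ← h.1]; simp [readWord]
  rw [isCIT_iff hJ] at hc
  have key : ∀ b ∈ boxes g, ∀ b' ∈ boxes g, entryAt g b < entryAt g b' →
      beforeB (unstd B g) b b' = true := by
    intro b hb b' hb' hlt
    have m1 := (std_mem hs _).1 (entry_mem hb)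
    have m2 := (std_mem hs _).1 (entry_mem hb')
    rw [beforeB_iff, unstd_entry B g b hb, unstd_entry B g b' hb']
    have hle := pl_mono B (i := entryAt g b - 1) (j := entryAt g b' - 1) (by omega) (by omega)
    rcases hle.lt_or_eq with hl | he
    · exact Or.inl hl
    · refine Or.inr ⟨he, ?_⟩
      obtain ⟨k, hk⟩ := Nat.exists_eq_add_of_lt hlt
      have hr := good_rows h hn (entryAt g b) m1.1 (k+1) (by omega) (by
        rw [he, hk]; rfl)
      have e1 : rowOf g (entryAt g b) = b.1 := congrArg Prod.fst (posOf_entry hs hb)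
      have e2 : rowOf g (entryAt g b') = b'.1 := congrArg Prod.fst (posOf_entry hs hb')
      rw [← add_assoc, ← hk, e1, e2] at hr
      rcases hr.lt_or_eq with hr | hr
      · exact Or.inl hr
      · refine Or.inr ⟨hr.symm, ?_⟩
        by_contra hcol
        obtain ⟨r, j⟩ := b
        obtain ⟨r', j'⟩ := b'
        simp only at hr hcol
        subst hr
        rcases (not_lt.1 hcol).lt_or_eq with hl | hl
        · have := hc.2.1 r' j' j hl hb; omega
        · subst hl; omega
  refine ⟨(unstd_shape B g).symm, hs, ?_⟩
  intro b hb b' hb'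
  refine ⟨key b hb b' hb', fun hbe => ?_⟩
  by_contra hcon
  rcases (not_lt.1 hcon).lt_or_eq with hl | hl
  · exact beforeB_irrefl _ _ (beforeB_trans _ hbe (key b' hb' b hb hl))
  · have := std_inj hs hb' hb hl
    subst this
    exact beforeB_irrefl _ _ hbe

theorem unstd_maps {A : Type*} [Inhabited A] {J B : Sentence A} (hJ : IsSentence J) {g : Filling}
    (hc : IsCIT J g) (hs : IsStandardF g) (h : Good J B g) :
    IsCIT J (unstd B g) ∧ HasType J (unstd B g) B := by
  have hcomp := unstd_compat hJ hc hs h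
  have hn : (pl 1 B).length = nBoxes g := by
    rw [pl_length, ← h.1]; simp [readWord]
  rw [isCIT_iff hJ] at hc
  have hbx := boxes_congr (unstd_shape B g)
  have hpos : ∀ b ∈ boxes (unstd B g), 1 ≤ entryAt (unstd B g) b := by
    intro b hb
    rw [hbx] at hb
    have m1 := (std_mem hs _).1 (entry_mem hb)
    rw [unstd_entry B g b hb, List.getD_eq_getElem _ _ (by omega)]
    exact pl_ge 1 B _ (List.getElem_mem _)
  have hsh := (unstd_shape B g).trans hc.1
  refine ⟨(isCIT_iff hJ _).2 ⟨hsh, ?_, ?_, hpos⟩, ?_⟩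
  · intro r j j' hj hb
    rw [hbx] at hb
    have hb0 : (r, j) ∈ boxes g := by
      rw [mem_boxes] at hb ⊢; exact hj.trans hb
    have m1 := (std_mem hs _).1 (entry_mem hb)
    have := hc.2.1 r j j' hj hb
    rw [unstd_entry B g _ hb, unstd_entry B g _ hb0]
    exact pl_mono B (by omega) (by omega)
  · intro r hb
    rw [hbx] at hb
    have hb0 : (r, 0) ∈ boxes g := by
      rw [mem_boxes, shape_row hc.1] at hb ⊢
      simp only at hb ⊢
      have hr : r + 1 < J.length := by
        by_contra hcc
        simp [List.getD, List.getElem?_eq_none (not_lt.1 hcc)] at hb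
      rw [List.getD_eq_getElem J _ (by omega : r < J.length)]
      exact List.length_pos_iff.2 (hJ _ (List.getElem_mem _))
    have := (hcomp.2.2 _ hb0 _ hb).1 (hc.2.2.1 r hb)
    rw [beforeB_iff] at this
    simp only at this
    omega
  · rw [hasType_iff hsh hcomp hpos]
    refine ⟨h.1, ?_⟩
    rw [ordB, List.map_map]
    conv_rhs => rw [← map_range_getD (pl 1 B) 0]
    rw [hn]
    apply List.map_congr_left
    intro i hi
    rw [List.mem_range] at hi
    have := posOf_spec g (i+1) ((std_mem hs _).2 (by omega))
    simp only [Function.comp]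
    rw [unstd_entry B g _ this.1, this.2]
    rfl

theorem std_maps {A : Type*} [Inhabited A] {J B : Sentence A} (hJ : IsSentence J) {T : Filling}
    (hc : IsCIT J T) (ht : HasType J T B) :
    (IsCIT J (stdFill T) ∧ IsStandardF (stdFill T) ∧ Good J B (stdFill T)) ∧
      unstd B (stdFill T) = T := by
  rw [isCIT_iff hJ] at hc
  have hcomp := std_compat T
  have hs := hcomp.2.1
  have hbx := boxes_congr hcomp.1
  obtain ⟨hw, hp⟩ := (hasType_iff hc.1 hcomp hc.2.2.2 B).1 ht
  have hval : ∀ i, i < nBoxes (stdFill T) →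
      (pl 1 B).getD i 0 = entryAt T (posOf (stdFill T) (i + 1)) := by
    intro i hi
    rw [← hp, ordB, List.map_map, List.getD_eq_getElem _ _ (by simpa using hi)]
    simp
  refine ⟨⟨(isCIT_iff hJ _).2 ⟨hcomp.1.trans hc.1, ?_, ?_, ?_⟩, hs, hw, ?_⟩, ?_⟩
  · intro r j j' hj hb
    have hb0 : (r, j) ∈ boxes (stdFill T) := by
      rw [mem_boxes] at hb ⊢; exact hj.trans hb
    refine ((hcomp.2.2 _ hb0 _ hb).2 ?_).le
    rw [beforeB_iff]
    rcases (hc.2.1 r j j' hj (hbx ▸ hb)).lt_or_eq with hl | hl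
    · exact Or.inl hl
    · exact Or.inr ⟨hl, Or.inr ⟨rfl, hj⟩⟩
  · intro r hb
    have hb0 : (r, 0) ∈ boxes (stdFill T) := by
      rw [mem_boxes, shape_row (hcomp.1.trans hc.1)] at hb ⊢
      simp only at hb ⊢
      have hr : r + 1 < J.length := by
        by_contra hcc
        simp [List.getD, List.getElem?_eq_none (not_lt.1 hcc)] at hb
      rw [List.getD_eq_getElem J _ (by omega : r < J.length)]
      exact List.length_pos_iff.2 (hJ _ (List.getElem_mem _))
    refine (hcomp.2.2 _ hb0 _ hb).2 ?_
    rw [beforeB_iff]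
    exact Or.inl (hc.2.2.1 r (hbx ▸ hb))
  · intro b hb
    exact ((std_mem hs _).1 (entry_mem hb)).1
  · intro i h1 h2 hrow
    have s1 := posOf_spec _ i ((std_mem hs _).2 ⟨h1, by omega⟩)
    have s2 := posOf_spec _ (i+1) ((std_mem hs _).2 ⟨by omega, h2⟩)
    have hb := (hcomp.2.2 _ s1.1 _ s2.1).1 (by rw [s1.2, s2.2]; omega)
    rw [hval i (by omega), hval (i - 1) (by omega), Nat.sub_add_cancel h1]
    rw [beforeB_iff] at hb
    have e1 : (posOf (stdFill T) i).1 = rowOf (stdFill T) i := rfl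
    have e2 : (posOf (stdFill T) (i+1)).1 = rowOf (stdFill T) (i+1) := rfl
    omega
  · refine fill_ext ((unstd_shape _ _).trans hcomp.1) ?_
    intro b hb
    rw [boxes_congr (unstd_shape _ _)] at hb
    have m1 := (std_mem hs _).1 (entry_mem hb)
    rw [unstd_entry B _ b hb, hval _ (by omega), Nat.sub_add_cancel m1.1, posOf_entry hs hb]

theorem scit_finite {A : Type*} (J : Sentence A) :
    {f : Filling | IsCIT J f ∧ IsStandardF f}.Finite := by
  refine Set.Finite.of_finite_image (f := List.flatten) ?_ ?_
  · refine Set.Finite.subset (List.finite_toSet (List.range' 1 (size J)).permutations) ?_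
    rintro _ ⟨f, ⟨h1, h2⟩, rfl⟩
    have : nBoxes f = size J := by
      rw [nBoxes, List.length_flatten, h1.1]; rfl
    rw [IsStandardF, this] at h2
    exact List.mem_permutations.2 h2
  · intro f hf g hg h
    exact List.eq_iff_flatten_eq.2 ⟨h, hf.1.1.trans hg.1.1.symm⟩

theorem finsum_fiber {α β : Type*} (S : Set α) (hS : S.Finite) (co : α → β) (R : Set β) :
    ∑ᶠ C ∈ R, Set.ncard {f | f ∈ S ∧ co f = C} = Set.ncard {f | f ∈ S ∧ co f ∈ R} := by
  classical
  have hset : ∀ C, {f | f ∈ S ∧ co f = C} = ↑(hS.toFinset.filter (fun f => co f = C)) := by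
    intro C; ext f; simp
  have hset2 : {f | f ∈ S ∧ co f ∈ R} = ↑(hS.toFinset.filter (fun f => co f ∈ R)) := by
    ext f; simp
  rw [hset2, Set.ncard_coe_finset]
  simp only [hset, Set.ncard_coe_finset]
  rw [finsum_mem_eq_sum_of_inter_support_eq (t := (hS.toFinset.image co).filter (fun C => C ∈ R))]
  · rw [Finset.card_eq_sum_card_fiberwise (f := co)
      (t := (hS.toFinset.image co).filter (fun C => C ∈ R))]
    · apply Finset.sum_congr rfl
      intro C hC
      congr 1
      rw [Finset.filter_filter]
      apply Finset.filter_congr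
      intro f _
      simp only [Finset.mem_filter] at hC
      constructor
      · rintro rfl; exact ⟨hC.2, rfl⟩
      · exact fun h => h.2
    · intro f hf
      simp only [Finset.coe_filter, Set.mem_setOf_eq] at hf
      simp only [Finset.coe_filter, Set.mem_setOf_eq, Finset.mem_image]
      exact ⟨⟨f, hf.1, rfl⟩, hf.2⟩
  · ext C
    simp only [Set.mem_inter_iff, Function.mem_support, Finset.coe_filter, Set.mem_setOf_eq,
      Finset.mem_image]
    constructor
    · rintro ⟨h1, h2⟩
      refine ⟨⟨?_, h1⟩, h2⟩
      obtain ⟨f, hf⟩ := Finset.card_ne_zero.1 h2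
      rw [Finset.mem_filter] at hf
      exact ⟨f, hf⟩
    · rintro ⟨⟨_, h1⟩, h2⟩
      exact ⟨h1, h2⟩

/-- For sentences `J` and `B`, `K_{J,B} = Σ_{C ⪰ B} L_{J,C}`, the sum
running over all coarsenings `C` of `B`. -/
theorem statement5 {A : Type*} [Inhabited A] (J B : Sentence A)
    (hJ : IsSentence J) (hB : IsSentence B) :
    KJB J B = ∑ᶠ C ∈ {C : Sentence A | Refines B C}, LJC J C := by
  have hR := finsum_fiber {f : Filling | IsCIT J f ∧ IsStandardF f} (scit_finite J) (coA J)
    {C : Sentence A | Refines B C}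
  simp only [Set.mem_setOf_eq, and_assoc] at hR
  have hgood : ∀ g, Refines B (coA J g) ↔ Good J B g := by
    intro g
    have := refines_coA J B g
    simpa [hB, Good] using this
  simp only [Set.mem_setOf_eq, LJC]
  rw [hR, KJB]
  simp only [hgood]
  refine Set.BijOn.ncard_eq (f := stdFill) (Set.InvOn.bijOn (f' := unstd B) ⟨?_, ?_⟩ ?_ ?_)
  · rintro T ⟨h1, h2⟩
    exact (std_maps hJ h1 h2).2
  · rintro g ⟨h1, h2, h3⟩
    exact compat_unique (unstd_compat hJ h1 h2 h3)
  · rintro T ⟨h1, h2⟩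
    exact (std_maps hJ h1 h2).1
  · rintro g ⟨h1, h2, h3⟩
    exact unstd_maps hJ h1 h2 h3

end ColoredImm
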